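/- Let U ⊆ ℂ* × ℂ be an open set such that for every c > 0 and ε > 0 there exists R > 0 with S(c,ε,R) := {(z,ξ) ∈ ℂ* × ℂ : e^{−c} < |z| < e^{c}, |ξ| > R, arg ξ ∈ (ε, π−ϖ−ε)} ⊆ U. Let f : U → ℂ be holomorphic and bounded, and suppose f(q·z, ξ−1) = f(z,ξ) whenever both (z,ξ) ∈ U and (q·z, ξ−1) ∈ U. Then there exist r > 0 and a holomorphic function g on the polydisc {(X,Y) ∈ ℂ² : |X| < r, |Y| < r} such that for every c > 0 and ε > 0 there is R > 0 with f(z,ξ) = g(Π(z,ξ)) for all (z,ξ) ∈ S(c,ε,R). If moreover for every c > 0 and ε > 0 the supremum of |f| over S(c,ε,R) tends to 0 as R → ∞, then g(0,0) = 0. -/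

import Mathlib

open Complex

/-- The Serre map `Π(z,ξ) = (exp(2πiξ), z·exp(2πiτξ))`. -/
noncomputable def PiMap (τ : ℂ) (p : ℂ × ℂ) : ℂ × ℂ :=
  (Complex.exp (2 * (Real.pi : ℂ) * Complex.I * p.2),
   p.1 * Complex.exp (2 * (Real.pi : ℂ) * Complex.I * τ * p.2))

/-- The sector `S(c,ε,R)` of directions `arg ξ ∈ (ε, π − ϖ − ε)`, `ϖ = arg τ`. -/
noncomputable def Ssector (τ : ℂ) (c ε R : ℝ) : Set (ℂ × ℂ) :=
  {p : ℂ × ℂ | p.1 ≠ 0 ∧ Real.exp (-c) < ‖p.1‖ ∧ ‖p.1‖ < Real.exp c ∧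
    R < ‖p.2‖ ∧ ε < Complex.arg p.2 ∧
    Complex.arg p.2 < Real.pi - Complex.arg τ - ε}


open MeasureTheory in
lemma swap01 (f : ℝ → ℝ → ℂ) (hf : Continuous (Function.uncurry f)) :
    ∫ y in (0:ℝ)..1, ∫ x in (0:ℝ)..1, f y x = ∫ x in (0:ℝ)..1, ∫ y in (0:ℝ)..1, f y x := by
  simp only [intervalIntegral.integral_of_le zero_le_one]
  apply integral_integral_swap
  rw [Measure.prod_restrict]
  exact (hf.continuousOn.integrableOn_compact (isCompact_Icc.prod isCompact_Icc)).mono_set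
    (Set.prod_mono Set.Ioc_subset_Icc_self Set.Ioc_subset_Icc_self)

lemma shift_line (h : ℂ → ℂ) (hper : ∀ w, h (w + 1) = h w) (t₁ t₂ : ℝ)
    (hd : ∀ w : ℂ, w.im ∈ Set.uIcc t₁ t₂ → DifferentiableAt ℂ h w) :
    ∫ x in (0:ℝ)..1, h (x + t₁ * I) = ∫ x in (0:ℝ)..1, h (x + t₂ * I) := by
  have key := Complex.integral_boundary_rect_eq_zero_of_differentiableOn h ⟨0, t₁⟩ ⟨1, t₂⟩
    (fun w hw => (hd w (by simpa using hw.2)).differentiableWithinAt)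
  simp only at key
  have e : ∀ y : ℝ, h (((1:ℝ):ℂ) + y * I) = h (((0:ℝ):ℂ) + y * I) := by
    intro y
    rw [← hper (((0:ℝ):ℂ) + y * I)]; congr 1; push_cast; ring
  simp only [e] at key
  rw [add_sub_cancel_right] at key
  exact sub_eq_zero.mp key

lemma fourier1 (h : ℝ → ℂ) (hc : Continuous h) (hper : ∀ x, h (x + 1) = h x) (a : ℤ → ℂ)
    (ha : ∀ m, a m = ∫ x in (0:ℝ)..1, h x * exp (-(2 * Real.pi * I * (m * x))))
    (hneg : ∀ m, m < 0 → a m = 0) (hs : Summable fun m : ℕ => a m) (x : ℝ) :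
    HasSum (fun m : ℕ => a m * exp (2 * Real.pi * I * (m * x))) (h x) := by
  have hp : Function.Periodic h 1 := hper
  have : Fact ((0:ℝ) < 1) := ⟨one_pos⟩
  let H : C(AddCircle (1:ℝ), ℂ) := ⟨hp.lift, by
    exact continuous_coinduced_dom.mpr hc⟩
  have hH : ∀ x : ℝ, H x = h x := fun x => hp.lift_coe x
  have hinj : Function.Injective (fun m : ℕ => (m : ℤ)) := Nat.cast_injective
  have hr : ∀ m : ℤ, m ∉ Set.range (fun m : ℕ => (m : ℤ)) → m < 0 := by
    intro m hm
    by_contra hcon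
    exact hm ⟨m.toNat, by simp; omega⟩
  have hcoef : fourierCoeff H = a := by
    ext m
    rw [fourierCoeff_eq_intervalIntegral H m 0, ha]
    simp only [hH, zero_add, fourier_coe_apply]
    simp only [div_one, one_smul, smul_eq_mul]
    congr 1; ext x
    rw [mul_comm]; congr 2; push_cast; ring
  have hsum : Summable (fourierCoeff H) := by
    rw [hcoef]
    exact (hinj.summable_iff (fun m hm => hneg m (hr m hm))).mp hs
  have := has_pointwise_sum_fourier_series_of_summable hsum (x : AddCircle (1:ℝ))
  rw [hH, hcoef] at this
  rw [← hinj.hasSum_iff (fun m hm => by rw [hneg m (hr m hm)]; simp)] at this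
  convert this using 2 with m
  simp only [Function.comp, fourier_coe_apply, smul_eq_mul]
  congr 2; push_cast; ring

lemma double_series (a : ℕ × ℕ → ℂ) (M r : ℝ) (hr : 0 < r)
    (ha : ∀ p, ‖a p‖ ≤ M * ((r⁻¹) ^ p.1 * (r⁻¹) ^ p.2)) :
    DifferentiableOn ℂ (fun w : ℂ × ℂ => ∑' p : ℕ × ℕ, a p * (w.1 ^ p.1 * w.2 ^ p.2))
      {w : ℂ × ℂ | ‖w.1‖ < r ∧ ‖w.2‖ < r} := by
  rintro w ⟨h1, h2⟩
  apply DifferentiableAt.differentiableWithinAt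
  obtain ⟨s, hs, hsr⟩ := exists_between (max_lt h1 h2)
  have hs0 : 0 < s := lt_of_le_of_lt ((norm_nonneg w.1).trans (le_max_left _ _)) hs
  have hM : 0 ≤ M := by simpa using (norm_nonneg _).trans (ha (0,0))
  set ρ := s / r with hρ
  have hρ0 : 0 < ρ := by positivity
  have hρ1 : ρ < 1 := (div_lt_one hr).mpr hsr
  let S : Set (ℂ × ℂ) := Metric.ball 0 s
  have hS : ∀ v ∈ S, ‖v.1‖ < s ∧ ‖v.2‖ < s := by
    intro v hv
    have : ‖v‖ < s := by simpa [S] using hv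
    exact ⟨(norm_fst_le v).trans_lt this, (norm_snd_le v).trans_lt this⟩
  let f' : ℕ × ℕ → ℂ × ℂ → (ℂ × ℂ →L[ℂ] ℂ) := fun p v =>
    a p • (v.1 ^ p.1 • ((p.2 * v.2 ^ (p.2 - 1)) • ContinuousLinearMap.snd ℂ ℂ ℂ) +
      v.2 ^ p.2 • ((p.1 * v.1 ^ (p.1 - 1)) • ContinuousLinearMap.fst ℂ ℂ ℂ))
  have hder : ∀ p, ∀ v ∈ S, HasFDerivAt (fun w : ℂ × ℂ => a p * (w.1 ^ p.1 * w.2 ^ p.2))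
      (f' p v) v := by
    intro p v _
    have e1 : HasFDerivAt (fun w : ℂ × ℂ => w.1 ^ p.1)
        ((p.1 * v.1 ^ (p.1 - 1)) • ContinuousLinearMap.fst ℂ ℂ ℂ) v :=
      (hasDerivAt_pow p.1 v.1).comp_hasFDerivAt v hasFDerivAt_fst
    have e2 : HasFDerivAt (fun w : ℂ × ℂ => w.2 ^ p.2)
        ((p.2 * v.2 ^ (p.2 - 1)) • ContinuousLinearMap.snd ℂ ℂ ℂ) v :=
      (hasDerivAt_pow p.2 v.2).comp_hasFDerivAt v hasFDerivAt_snd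
    exact (e1.mul e2).const_mul (a p)
  have hn : ∀ k : ℕ, ∀ z : ℂ, ‖z‖ < s → ‖(k * z ^ (k - 1) : ℂ)‖ ≤ s⁻¹ * (k * s ^ k) := by
    intro k z hz
    rcases k with _ | k
    · simp
    · rw [norm_mul, norm_pow, Complex.norm_natCast, Nat.add_sub_cancel, pow_succ]
      have : ‖z‖ ^ k ≤ s ^ k := by gcongr
      calc _ ≤ ((k+1 : ℕ):ℝ) * s ^ k := by gcongr
        _ = _ := by field_simp
  have hu1 : Summable (fun k : ℕ => ((k:ℝ) + 1) * ρ ^ k) := by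
    have h1 := summable_pow_mul_geometric_of_norm_lt_one 1 (r := ρ)
      (by rwa [Real.norm_of_nonneg hρ0.le])
    have h0 := summable_geometric_of_lt_one hρ0.le hρ1
    refine (h1.add h0).congr fun k => by ring
  have hu2 : Summable (fun p : ℕ × ℕ => (((p.1:ℝ) + 1) * ρ ^ p.1) * (((p.2:ℝ) + 1) * ρ ^ p.2)) :=
    hu1.mul_of_nonneg hu1 (fun k => by positivity) (fun k => by positivity)
  have hbound : ∀ p, ∀ v ∈ S, ‖f' p v‖ ≤ (2 * M * s⁻¹) *
      ((((p.1:ℝ) + 1) * ρ ^ p.1) * (((p.2:ℝ) + 1) * ρ ^ p.2)) := by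
    intro p v hv
    obtain ⟨hv1, hv2⟩ := hS v hv
    have b1 := hn p.1 v.1 hv1
    have b2 := hn p.2 v.2 hv2
    have c1 : ‖v.1‖ ^ p.1 ≤ s ^ p.1 := by gcongr
    have c2 : ‖v.2‖ ^ p.2 ≤ s ^ p.2 := by gcongr
    have n1 : ‖ContinuousLinearMap.fst ℂ ℂ ℂ‖ ≤ 1 := ContinuousLinearMap.norm_fst_le ℂ ℂ ℂ
    have n2 : ‖ContinuousLinearMap.snd ℂ ℂ ℂ‖ ≤ 1 := ContinuousLinearMap.norm_snd_le ℂ ℂ ℂ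
    have hρp : ∀ k : ℕ, ρ ^ k = r⁻¹ ^ k * s ^ k := by
      intro k; rw [hρ, ← mul_pow]; congr 1; field_simp
    calc ‖f' p v‖ ≤ ‖a p‖ * (‖v.1‖ ^ p.1 * (‖(p.2 * v.2 ^ (p.2 - 1) : ℂ)‖ * ‖ContinuousLinearMap.snd ℂ ℂ ℂ‖) +
          ‖v.2‖ ^ p.2 * (‖(p.1 * v.1 ^ (p.1 - 1) : ℂ)‖ * ‖ContinuousLinearMap.fst ℂ ℂ ℂ‖)) := by
          simp only [f']
          rw [norm_smul]
          gcongr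
          refine (norm_add_le _ _).trans ?_
          rw [norm_smul, norm_smul, norm_smul, norm_smul, norm_pow, norm_pow]
      _ ≤ (M * ((r⁻¹) ^ p.1 * (r⁻¹) ^ p.2)) * (s ^ p.1 * ((s⁻¹ * (p.2 * s ^ p.2)) * 1) +
          s ^ p.2 * ((s⁻¹ * (p.1 * s ^ p.1)) * 1)) := by
          gcongr
          exact ha p
      _ = (M * s⁻¹) * (((p.1:ℝ) + p.2) * (ρ ^ p.1 * ρ ^ p.2)) := by
          rw [hρp, hρp]; ring
      _ ≤ (M * s⁻¹) * ((2 * ((p.1:ℝ) + 1) * (p.2 + 1)) * (ρ ^ p.1 * ρ ^ p.2)) := by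
          gcongr
          nlinarith [(Nat.cast_nonneg p.1 : (0:ℝ) ≤ p.1), (Nat.cast_nonneg p.2 : (0:ℝ) ≤ p.2),
            mul_nonneg (Nat.cast_nonneg p.1 : (0:ℝ) ≤ p.1) (Nat.cast_nonneg p.2 : (0:ℝ) ≤ p.2)]
      _ = _ := by ring
  have h0 : Summable (fun p : ℕ × ℕ => a p * ((0 : ℂ × ℂ).1 ^ p.1 * (0 : ℂ × ℂ).2 ^ p.2)) := by
    apply summable_of_ne_finset_zero (s := {((0:ℕ),(0:ℕ))})
    rintro ⟨i, j⟩ hp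
    simp only [Finset.mem_singleton, Prod.mk.injEq, not_and_or] at hp
    rcases hp with hp | hp <;> simp [hp]
  have hw : w ∈ S := by
    simp only [S, Metric.mem_ball, dist_zero_right, Prod.norm_def]
    exact hs
  exact (hasFDerivAt_tsum_of_isPreconnected (hu2.mul_left (2 * M * s⁻¹)) Metric.isOpen_ball
    (convex_ball 0 s).isPreconnected hder hbound (Metric.mem_ball_self hs0) h0 hw).differentiableAt

/-- Region in the plane of imaginary parts. -/
def Om (K T : ℝ) : Set (ℝ × ℝ) := {p | T < p.1 ∧ T < p.2 ∧ p.1 < K * p.2 ∧ p.2 < K * p.1}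

lemma Om_open (K T : ℝ) : IsOpen (Om K T) := by
  have h1 : IsOpen {p : ℝ × ℝ | T < p.1} := isOpen_lt (by fun_prop) (by fun_prop)
  have h2 : IsOpen {p : ℝ × ℝ | T < p.2} := isOpen_lt (by fun_prop) (by fun_prop)
  have h3 : IsOpen {p : ℝ × ℝ | p.1 < K * p.2} := isOpen_lt (by fun_prop) (by fun_prop)
  have h4 : IsOpen {p : ℝ × ℝ | p.2 < K * p.1} := isOpen_lt (by fun_prop) (by fun_prop)
  exact h1.inter (h2.inter (h3.inter h4))

lemma Om_preconn (K T : ℝ) : IsPreconnected (Om K T) := by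
  apply Convex.isPreconnected
  rintro ⟨a, b⟩ ⟨h1, h2, h3, h4⟩ ⟨c, d⟩ ⟨g1, g2, g3, g4⟩ s t hs ht hst
  simp only at h1 h2 h3 h4 g1 g2 g3 g4
  have aux : ∀ x y : ℝ, 0 < x → 0 < y → 0 < s * x + t * y := by
    intro x y hx hy
    rcases hs.eq_or_lt with h | h
    · have : t = 1 := by linarith
      subst this; rw [← h]; linarith
    · have := mul_pos h hx
      have := mul_nonneg ht hy.le
      linarith
  have k1 := aux _ _ (sub_pos.mpr h1) (sub_pos.mpr g1)
  have k2 := aux _ _ (sub_pos.mpr h2) (sub_pos.mpr g2)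
  have k3 := aux _ _ (sub_pos.mpr h3) (sub_pos.mpr g3)
  have k4 := aux _ _ (sub_pos.mpr h4) (sub_pos.mpr g4)
  have e : s * T + t * T = T := by rw [← add_mul, hst, one_mul]
  refine ⟨?_, ?_, ?_, ?_⟩ <;> simp only [Prod.smul_mk, Prod.mk_add_mk, smul_eq_mul] <;> nlinarith

/-- Integrand of the coefficients. -/
noncomputable def ig (F : ℂ × ℂ → ℂ) (m n : ℤ) (ξ η : ℂ) : ℂ :=
  F (ξ, η) * exp (-(2 * Real.pi * I * (m * ξ + n * η)))

/-- Laurent coefficients. -/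
noncomputable def cf (F : ℂ × ℂ → ℂ) (m n : ℤ) (p : ℝ × ℝ) : ℂ :=
  ∫ y in (0:ℝ)..1, ∫ x in (0:ℝ)..1, ig F m n (x + p.1 * I) (y + p.2 * I)

lemma exp_int_shift (m : ℤ) (w : ℂ) : exp (-(2 * Real.pi * I * m) + w) = exp w := by
  rw [exp_add]
  have : exp (-(2 * Real.pi * I * m)) = 1 := by
    rw [Complex.exp_eq_one_iff]
    exact ⟨-m, by push_cast; ring⟩
  rw [this, one_mul]

section tube
variable {F : ℂ × ℂ → ℂ}

lemma ig_per1 (per1 : ∀ ξ η, F (ξ + 1, η) = F (ξ, η)) (m n : ℤ) (ξ η : ℂ) :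
    ig F m n (ξ + 1) η = ig F m n ξ η := by
  unfold ig
  rw [per1]
  congr 1
  rw [← exp_int_shift m (-(2 * Real.pi * I * (m * ξ + n * η)))]
  congr 1; ring

lemma ig_per2 (per2 : ∀ ξ η, F (ξ, η + 1) = F (ξ, η)) (m n : ℤ) (ξ η : ℂ) :
    ig F m n ξ (η + 1) = ig F m n ξ η := by
  unfold ig
  rw [per2]
  congr 1
  rw [← exp_int_shift n (-(2 * Real.pi * I * (m * ξ + n * η)))]
  congr 1; ring

lemma ig_diff {m n : ℤ} {p : ℂ × ℂ} (h : DifferentiableAt ℂ F p) :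
    DifferentiableAt ℂ (fun p : ℂ × ℂ => ig F m n p.1 p.2) p := by
  unfold ig
  refine DifferentiableAt.mul h ?_
  fun_prop

lemma ig_cont {W : Set (ℝ × ℝ)}
    (hd : ∀ p : ℂ × ℂ, (p.1.im, p.2.im) ∈ W → DifferentiableAt ℂ F p) (m n : ℤ) (p : ℝ × ℝ)
    (hp : p ∈ W) :
    Continuous (Function.uncurry fun y x : ℝ => ig F m n (x + p.1 * I) (y + p.2 * I)) := by
  rw [continuous_iff_continuousAt]
  rintro ⟨y, x⟩
  have h := (ig_diff (m := m) (n := n) (hd (x + p.1 * I, y + p.2 * I) (by simpa using hp))).continuousAt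
  have h2 : ContinuousAt (fun q : ℝ × ℝ => (((q.2 : ℂ) + p.1 * I, (q.1 : ℂ) + p.2 * I) : ℂ × ℂ)) (y, x) := by
    fun_prop
  exact ContinuousAt.comp (f := fun q : ℝ × ℝ => (((q.2 : ℂ) + p.1 * I, (q.1 : ℂ) + p.2 * I) : ℂ × ℂ)) h h2

lemma cf_const (per1 : ∀ ξ η, F (ξ + 1, η) = F (ξ, η)) (per2 : ∀ ξ η, F (ξ, η + 1) = F (ξ, η))
    {W : Set (ℝ × ℝ)} (hW : IsOpen W) (hW' : IsPreconnected W)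
    (hd : ∀ p : ℂ × ℂ, (p.1.im, p.2.im) ∈ W → DifferentiableAt ℂ F p) (m n : ℤ)
    {p q : ℝ × ℝ} (hp : p ∈ W) (hq : q ∈ W) : cf F m n p = cf F m n q := by
  have loc : ∀ p ∈ W, ∀ᶠ q in nhds p, cf F m n q = cf F m n p := by
    rintro ⟨t₀, u₀⟩ hp
    obtain ⟨δ, hδ, hball⟩ := Metric.isOpen_iff.mp hW _ hp
    have hbox : ∀ t u : ℝ, |t - t₀| < δ → |u - u₀| < δ → (t, u) ∈ W := by
      intro t u ht hu
      apply hball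
      rw [Metric.mem_ball, Prod.dist_eq, Real.dist_eq, Real.dist_eq]
      exact max_lt ht hu
    filter_upwards [Metric.ball_mem_nhds _ hδ] with q hq
    obtain ⟨t, u⟩ := q
    rw [Metric.mem_ball, Prod.dist_eq, Real.dist_eq, Real.dist_eq] at hq
    obtain ⟨ht, hu⟩ := max_lt_iff.mp hq
    simp only at ht hu
    have between : ∀ a b c : ℝ, |a - b| < δ → c ∈ Set.uIcc a b → |c - b| < δ := by
      intro a b c hab hc
      rw [Set.uIcc_comm] at hc
      exact (Set.abs_sub_left_of_mem_uIcc hc).trans_lt hab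
    calc cf F m n (t, u) = cf F m n (t₀, u) := by
          unfold cf
          apply intervalIntegral.integral_congr
          intro y _
          simp only
          apply shift_line (fun ξ => ig F m n ξ (y + u * I))
          · intro w; exact ig_per1 per1 m n w _
          · intro w hw
            have := ig_diff (m := m) (n := n) (hd (w, y + u * I) (by
              simpa using hbox _ _ (between _ _ _ ht hw) hu))
            exact DifferentiableAt.comp w (f := fun w : ℂ => ((w, y + u * I) : ℂ × ℂ)) this (by fun_prop)
      _ = cf F m n (t₀, u₀) := by
          unfold cf
          rw [swap01 _ (ig_cont hd m n (t₀, u) (hbox _ _ (by simpa using hδ) hu)),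
            swap01 _ (ig_cont hd m n (t₀, u₀) hp)]
          apply intervalIntegral.integral_congr
          intro x _
          simp only
          apply shift_line (fun η => ig F m n (x + t₀ * I) η)
          · intro w; exact ig_per2 per2 m n _ w
          · intro w hw
            have := ig_diff (m := m) (n := n) (hd (x + t₀ * I, w) (by
              simpa using hbox _ _ (by simpa using hδ) (between _ _ _ hu hw)))
            exact DifferentiableAt.comp w (f := fun w : ℂ => ((x + t₀ * I, w) : ℂ × ℂ)) this (by fun_prop)
  have hder : ∀ p ∈ W, HasFDerivAt (cf F m n) (0 : ℝ × ℝ →L[ℝ] ℂ) p := by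
    intro p hp
    exact (hasFDerivAt_const (cf F m n p) p).congr_of_eventuallyEq (loc p hp)
  exact hW.is_const_of_fderiv_eq_zero (𝕜 := ℝ) hW'
    (fun p hp => (hder p hp).differentiableAt.differentiableWithinAt)
    (fun p hp => (hder p hp).fderiv) hp hq

lemma ig_norm (m n : ℤ) (x y t u : ℝ) : ‖ig F m n (x + t * I) (y + u * I)‖ =
    ‖F (x + t * I, y + u * I)‖ * Real.exp (2 * Real.pi * (m * t + n * u)) := by
  unfold ig
  rw [norm_mul, Complex.norm_exp]
  congr 2
  simp
  try ring

lemma cf_bound {M : ℝ} (m n : ℤ) (p : ℝ × ℝ)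
    (hM : ∀ w : ℂ × ℂ, (w.1.im, w.2.im) = p → ‖F w‖ ≤ M) :
    ‖cf F m n p‖ ≤ M * Real.exp (2 * Real.pi * (m * p.1 + n * p.2)) := by
  unfold cf
  have := intervalIntegral.norm_integral_le_of_norm_le_const (a := (0:ℝ)) (b := 1)
    (f := fun y : ℝ => ∫ x in (0:ℝ)..1, ig F m n (x + p.1 * I) (y + p.2 * I))
    (C := M * Real.exp (2 * Real.pi * (m * p.1 + n * p.2))) (by
      intro y _
      have := intervalIntegral.norm_integral_le_of_norm_le_const (a := (0:ℝ)) (b := 1)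
        (f := fun x : ℝ => ig F m n (x + p.1 * I) (y + p.2 * I))
        (C := M * Real.exp (2 * Real.pi * (m * p.1 + n * p.2))) (by
          intro x _
          rw [ig_norm]
          gcongr
          apply hM
          simp)
      simpa using this)
  simpa using this

end tube

lemma Om_diag {K T l : ℝ} (hK : 1 < K) (h0 : 0 < l) (hT : T < l) : (l, l) ∈ Om K T := by
  refine ⟨hT, hT, ?_, ?_⟩ <;> simp only <;> nlinarith

lemma zero_of_exp_bound {a : ℂ} {M N : ℝ} 
    (h : ∀ u : ℝ, N < u → ‖a‖ ≤ M * Real.exp (-u)) : a = 0 := by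
  have h1 : Filter.Tendsto (fun u : ℝ => M * Real.exp (-u)) Filter.atTop (nhds (M * 0)) :=
    Real.tendsto_exp_neg_atTop_nhds_zero.const_mul M
  rw [mul_zero] at h1
  have := ge_of_tendsto h1 (Filter.eventually_atTop.mpr ⟨N + 1, fun u hu => h u (by linarith)⟩)
  exact norm_le_zero_iff.mp this

theorem tube_main (F : ℂ × ℂ → ℂ) (per1 : ∀ ξ η, F (ξ + 1, η) = F (ξ, η))
    (per2 : ∀ ξ η, F (ξ, η + 1) = F (ξ, η)) (T : ℝ → ℝ) (M : ℝ)
    (hd : ∀ K, 1 < K → ∀ p : ℂ × ℂ, (p.1.im, p.2.im) ∈ Om K (T K) →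
      DifferentiableAt ℂ F p ∧ ‖F p‖ ≤ M) :
    ∃ r : ℝ, 0 < r ∧ ∃ g : ℂ × ℂ → ℂ,
      DifferentiableOn ℂ g {w : ℂ × ℂ | ‖w.1‖ < r ∧ ‖w.2‖ < r} ∧
      ∀ K, 1 < K → ∃ T' : ℝ, ∀ p : ℂ × ℂ, (p.1.im, p.2.im) ∈ Om K T' →
        F p = g (exp (2 * Real.pi * I * p.1), exp (2 * Real.pi * I * p.2)) := by
  set T0 : ℝ := |T 2| + 1 with hT0
  have hT0pos : 0 < T0 := by positivity
  have hT0T : T 2 < T0 := by have := le_abs_self (T 2); linarith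
  have hbase : (T0, T0) ∈ Om 2 (T 2) := Om_diag (by norm_num) hT0pos hT0T
  have hM : 0 ≤ M := (norm_nonneg _).trans (hd 2 (by norm_num) (T0 * I, T0 * I) (by simpa using hbase)).2
  have pi1 : 1 ≤ 2 * Real.pi := by linarith [Real.two_le_pi]
  obtain ⟨a, ha⟩ : ∃ a : ℤ → ℤ → ℂ, ∀ m n, a m n = cf F m n (T0, T0) := ⟨_, fun _ _ => rfl⟩
  have hall : ∀ K, 1 < K → ∀ p ∈ Om K (T K), ∀ m n, cf F m n p = a m n := by
    intro K hK p hp m n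
    set l := max (max (T K) (T 2)) 0 + 1 with hl
    have l1 : T K < l := by
      have := (le_max_left (T K) (T 2)).trans (le_max_left _ (0:ℝ)); linarith
    have l2 : T 2 < l := by
      have := (le_max_right (T K) (T 2)).trans (le_max_left _ (0:ℝ)); linarith
    have l3 : 0 < l := by
      have := le_max_right (max (T K) (T 2)) (0:ℝ); linarith
    rw [ha]
    exact (cf_const per1 per2 (Om_open K (T K)) (Om_preconn _ _) (fun q hq => (hd K hK q hq).1) m n
      hp (Om_diag hK l3 l1)).trans
      (cf_const per1 per2 (Om_open 2 (T 2)) (Om_preconn _ _) (fun q hq => (hd 2 (by norm_num) q hq).1) m n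
      (Om_diag (by norm_num) l3 l2) hbase)
  have hbd : ∀ K, 1 < K → ∀ p ∈ Om K (T K), ∀ m n : ℤ,
      ‖a m n‖ ≤ M * Real.exp (2 * Real.pi * (m * p.1 + n * p.2)) := by
    intro K hK p hp m n
    rw [← hall K hK p hp]
    apply cf_bound
    intro w hw
    exact (hd K hK w (by rw [hw]; exact hp)).2
  have van1 : ∀ m n : ℤ, m < 0 → a m n = 0 := by
    intro m n hm
    set k : ℝ := |(n:ℝ)| with hk
    have hk0 : 0 ≤ k := abs_nonneg _
    apply zero_of_exp_bound (M := M) (N := |T (k + 3)|)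
    intro u hu
    have hu0 : 0 < u := (abs_nonneg _).trans_lt hu
    have hTu : T (k + 3) < u := (le_abs_self _).trans_lt hu
    refine (hbd (k + 3) (by linarith) ((k + 1) * u, u) ⟨?_, ?_, ?_, ?_⟩ m n).trans ?_
    · simp only; nlinarith
    · exact hTu
    · simp only; nlinarith
    · simp only; nlinarith [mul_nonneg hk0 hu0.le, mul_nonneg hk0 (mul_nonneg hk0 hu0.le)]
    · gcongr
      have hm' : (m:ℝ) ≤ -1 := by exact_mod_cast (by omega : m ≤ -1)
      have hn' : (n:ℝ) ≤ k := le_abs_self _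
      have : (m:ℝ) * ((k + 1) * u) + n * u ≤ -u := by
        nlinarith [mul_nonneg hk0 hu0.le]
      nlinarith
  have van2 : ∀ m n : ℤ, n < 0 → a m n = 0 := by
    intro n m hm
    set k : ℝ := |(n:ℝ)| with hk
    have hk0 : 0 ≤ k := abs_nonneg _
    apply zero_of_exp_bound (M := M) (N := |T (k + 3)|)
    intro u hu
    have hu0 : 0 < u := (abs_nonneg _).trans_lt hu
    have hTu : T (k + 3) < u := (le_abs_self _).trans_lt hu
    refine (hbd (k + 3) (by linarith) (u, (k + 1) * u) ⟨?_, ?_, ?_, ?_⟩ n m).trans ?_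
    · exact hTu
    · simp only; nlinarith
    · simp only; nlinarith [mul_nonneg hk0 hu0.le, mul_nonneg hk0 (mul_nonneg hk0 hu0.le)]
    · simp only; nlinarith
    · gcongr
      have hm' : (m:ℝ) ≤ -1 := by exact_mod_cast (by omega : m ≤ -1)
      have hn' : (n:ℝ) ≤ k := le_abs_self _
      have : (n:ℝ) * u + m * ((k + 1) * u) ≤ -u := by
        nlinarith [mul_nonneg hk0 hu0.le]
      nlinarith
  set r : ℝ := Real.exp (-(2 * Real.pi * T0)) with hr
  have hrpos : 0 < r := Real.exp_pos _
  have hrinv : r⁻¹ = Real.exp (2 * Real.pi * T0) := by rw [hr, Real.exp_neg, inv_inv]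
  have hbd0 : ∀ m n : ℕ, ‖a m n‖ ≤ M * (r⁻¹ ^ m * r⁻¹ ^ n) := by
    intro m n
    refine (hbd 2 (by norm_num) _ hbase m n).trans (le_of_eq ?_)
    rw [hrinv, ← Real.exp_nat_mul, ← Real.exp_nat_mul, ← Real.exp_add]
    congr 2; push_cast; ring
  refine ⟨r, hrpos, fun w => ∑' p : ℕ × ℕ, a p.1 p.2 * (w.1 ^ p.1 * w.2 ^ p.2),
    double_series (fun p => a p.1 p.2) M r hrpos (fun p => hbd0 p.1 p.2), ?_⟩
  intro K hK
  refine ⟨max (T K) T0, ?_⟩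
  rintro ⟨ξ, η⟩ ⟨h1, h2, h3, h4⟩
  simp only at h1 h2 h3 h4 ⊢
  set t := ξ.im with ht
  set u := η.im with hu
  have hξ : ((ξ.re : ℂ) + t * I) = ξ := Complex.re_add_im ξ
  have hη : ((η.re : ℂ) + u * I) = η := Complex.re_add_im η
  obtain ⟨h1a, h1b⟩ := max_lt_iff.mp h1
  obtain ⟨h2a, h2b⟩ := max_lt_iff.mp h2
  have hp : (t, u) ∈ Om K (T K) := ⟨h1a, h2a, h3, h4⟩
  have hcont : Continuous (Function.uncurry fun y x : ℝ => F (x + t * I, y + u * I)) := by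
    have := ig_cont (W := Om K (T K)) (F := F) (fun q hq => (hd K hK q hq).1) 0 0 (t, u) hp
    simpa [ig] using this
  set ρ1 : ℝ := r⁻¹ * Real.exp (-(2 * Real.pi * t)) with hρ1
  set ρ2 : ℝ := r⁻¹ * Real.exp (-(2 * Real.pi * u)) with hρ2
  have hρ1p : 0 < ρ1 := by positivity
  have hρ2p : 0 < ρ2 := by positivity
  have hρ1l : ρ1 < 1 := by
    rw [hρ1, hrinv, ← Real.exp_add, Real.exp_lt_one_iff]; nlinarith
  have hρ2l : ρ2 < 1 := by
    rw [hρ2, hrinv, ← Real.exp_add, Real.exp_lt_one_iff]; nlinarith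
  obtain ⟨A, hA⟩ : ∃ A : ℤ → ℝ → ℂ, ∀ m y, A m y =
    ∫ x in (0:ℝ)..1, F (x + t * I, y + u * I) * exp (-(2 * Real.pi * I * (m * x))) :=
    ⟨_, fun _ _ => rfl⟩
  obtain ⟨B, hB⟩ : ∃ B : ℤ → ℤ → ℂ, ∀ m n, B m n =
    a m n * exp (2 * Real.pi * I * (m * (t * I) + n * (u * I))) := ⟨_, fun _ _ => rfl⟩
  have hBbd : ∀ m n : ℕ, ‖B m n‖ ≤ M * (ρ1 ^ m * ρ2 ^ n) := by
    intro m n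
    rw [hB, norm_mul]
    have : ‖exp (2 * Real.pi * I * ((m : ℤ) * (t * I) + (n : ℤ) * (u * I)))‖ =
        Real.exp (-(2 * Real.pi * t)) ^ m * Real.exp (-(2 * Real.pi * u)) ^ n := by
      rw [Complex.norm_exp, ← Real.exp_nat_mul, ← Real.exp_nat_mul, ← Real.exp_add]
      congr 1
      simp
      try ring
    rw [this]
    calc _ ≤ M * (r⁻¹ ^ m * r⁻¹ ^ n) * (Real.exp (-(2 * Real.pi * t)) ^ m * Real.exp (-(2 * Real.pi * u)) ^ n) := by
          gcongr; exact hbd0 m n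
      _ = _ := by rw [hρ1, hρ2, mul_pow, mul_pow]; ring
  have hcoef : ∀ m n : ℤ, B m n = ∫ y in (0:ℝ)..1, A m y * exp (-(2 * Real.pi * I * (n * y))) := by
    intro m n
    rw [hB, ← hall K hK _ hp, cf, ← intervalIntegral.integral_mul_const]
    apply intervalIntegral.integral_congr
    intro y _
    simp only [hA]
    rw [← intervalIntegral.integral_mul_const, ← intervalIntegral.integral_mul_const]
    apply intervalIntegral.integral_congr
    intro x _
    simp only [ig]
    rw [mul_assoc (F _), ← exp_add, mul_assoc (F _), ← exp_add]
    congr 2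
    ring
  have hAcont : ∀ m, Continuous (A m) := by
    intro m
    have : A m = fun y : ℝ => ∫ x in (0:ℝ)..1, F (x + t * I, y + u * I) * exp (-(2 * Real.pi * I * (m * x))) := by
      ext y; exact hA m y
    rw [this]
    apply intervalIntegral.continuous_parametric_intervalIntegral_of_continuous'
    apply Continuous.mul hcont
    fun_prop
  have hAper : ∀ m y, A m (y + 1) = A m y := by
    intro m y
    rw [hA, hA]
    apply intervalIntegral.integral_congr
    intro x _
    simp only
    rw [← per2 _ (y + u * I)]
    congr 3; push_cast; ring
  have hsρ2 : Summable (fun n : ℕ => ρ2 ^ n) := summable_geometric_of_lt_one hρ2p.le hρ2l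
  have hsρ1 : Summable (fun n : ℕ => ρ1 ^ n) := summable_geometric_of_lt_one hρ1p.le hρ1l
  have hBneg : ∀ m n : ℤ, n < 0 → B m n = 0 := by
    intro m n hn; rw [hB, van2 m n hn, zero_mul]
  have hBneg1 : ∀ m n : ℤ, m < 0 → B m n = 0 := by
    intro m n hn; rw [hB, van1 m n hn, zero_mul]
  have hA1 : ∀ (m : ℕ) (y : ℝ), HasSum (fun n : ℕ => B m n * exp (2 * Real.pi * I * (n * y))) (A m y) := by
    intro m y
    have := fourier1 (A m) (hAcont m) (hAper m) (B m) (hcoef m) (hBneg m) (by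
      apply Summable.of_norm_bounded ((hsρ2.mul_left (ρ1 ^ m)).mul_left M)
      intro n; exact hBbd m n) y
    exact this
  have hA0 : ∀ (m : ℤ) (y : ℝ), m < 0 → A m y = 0 := by
    intro m y hm
    have := fourier1 (A m) (hAcont m) (hAper m) (B m) (hcoef m) (hBneg m) (by
      simp only [hBneg1 m _ hm]; exact summable_zero) y
    simp only [hBneg1 m _ hm, zero_mul] at this
    exact this.unique hasSum_zero
  have nexp : ∀ (n : ℤ) (y : ℝ), ‖exp (2 * Real.pi * I * (n * y))‖ = 1 := by
    intro n y
    rw [Complex.norm_exp, Real.exp_eq_one_iff]; simp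
  have hAbd : ∀ (m : ℕ) (y : ℝ), ‖A m y‖ ≤ M * (ρ1 ^ m * ∑' n : ℕ, ρ2 ^ n) := by
    intro m y
    rw [← (hA1 m y).tsum_eq]
    apply tsum_of_norm_bounded ((hsρ2.hasSum.mul_left (ρ1 ^ m)).mul_left M)
    intro n
    have := nexp n y
    push_cast at this
    rw [norm_mul, this, mul_one]; exact hBbd m n
  have hF : HasSum (fun m : ℕ => A m η.re * exp (2 * Real.pi * I * (m * ξ.re))) (F (ξ, η)) := by
    have := fourier1 (fun x : ℝ => F (x + t * I, η.re + u * I))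
      (hcont.comp (f := fun x : ℝ => (η.re, x)) (by fun_prop)) (by
        intro x
        rw [← per1 (x + t * I)]
        congr 2; push_cast; ring) (fun m => A m η.re) (fun m => hA m _)
      (fun m hm => hA0 m _ hm) (by
        apply Summable.of_norm_bounded ((hsρ1.mul_right (∑' n : ℕ, ρ2 ^ n)).mul_left M)
        intro m; exact hAbd m _) ξ.re
    simp only [hξ, hη] at this
    exact this
  have hterm : ∀ m n : ℕ, a m n * (exp (2 * Real.pi * I * ξ) ^ m * exp (2 * Real.pi * I * η) ^ n) =
      (B m n * exp (2 * Real.pi * I * (n * η.re))) * exp (2 * Real.pi * I * (m * ξ.re)) := by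
    intro m n
    rw [hB, ← exp_nat_mul, ← exp_nat_mul, ← exp_add, mul_assoc (a m n), ← exp_add,
      mul_assoc (a m n), ← exp_add]
    congr 2
    conv_lhs => rw [← hξ, ← hη]
    push_cast; ring
  have hS : Summable (fun p : ℕ × ℕ => a p.1 p.2 *
      (exp (2 * Real.pi * I * ξ) ^ p.1 * exp (2 * Real.pi * I * η) ^ p.2)) := by
    apply Summable.of_norm_bounded ((hsρ1.mul_of_nonneg hsρ2 (fun k => by positivity)
      (fun k => by positivity)).mul_left M)
    rintro ⟨m, n⟩
    simp only
    have e1 := nexp n η.re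
    have e2 := nexp m ξ.re
    push_cast at e1 e2
    rw [hterm, norm_mul, norm_mul, e1, e2, mul_one, mul_one]
    exact hBbd m n
  have := hS.hasSum.prod_fiberwise (g := fun m : ℕ => A m η.re * exp (2 * Real.pi * I * (m * ξ.re))) (by
    intro m
    simp only [hterm]
    exact (hA1 m η.re).mul_right _)
  exact hF.unique this

lemma im_mul_eq (τ ξ : ℂ) : (τ * ξ).im = ‖τ‖ * ‖ξ‖ * Real.sin (arg τ + arg ξ) := by
  rw [Complex.mul_im, Real.sin_add]
  conv_lhs => rw [← Complex.norm_mul_sin_arg ξ, ← Complex.norm_mul_sin_arg τ,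
    ← Complex.norm_mul_cos_arg ξ, ← Complex.norm_mul_cos_arg τ]
  ring

lemma arg_pos_of (τ : ℂ) (hτ : 0 < τ.im) : 0 < arg τ ∧ arg τ < Real.pi := by
  have h0 : 0 ≤ arg τ := Complex.arg_nonneg_iff.mpr hτ.le
  have hs := Complex.norm_mul_sin_arg τ
  constructor
  · rcases h0.eq_or_lt with h | h
    · rw [← h, Real.sin_zero, mul_zero] at hs; linarith
    · exact h
  · rcases (Complex.arg_le_pi τ).eq_or_lt with h | h
    · rw [h, Real.sin_pi, mul_zero] at hs; linarith
    · exact h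

lemma sector_of (τ : ℂ) (hτ : 0 < τ.im) (K : ℝ) (hK : 0 < K) : ∃ ε : ℝ, 0 < ε ∧ ∀ ξ : ℂ,
    0 < ξ.im → 0 < (τ * ξ).im → ξ.im < K * (τ * ξ).im → (τ * ξ).im < K * ξ.im →
    ε < arg ξ ∧ arg ξ < Real.pi - arg τ - ε := by
  obtain ⟨t1, t2⟩ := arg_pos_of τ hτ
  have hτn : 0 < ‖τ‖ := hτ.trans_le (Complex.im_le_norm τ)
  set B : ℝ := (K + |τ.re|) / τ.im + 1 with hB
  have hBp : 0 < B := by positivity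
  set e1 : ℝ := 1 / B with he1
  set e2 : ℝ := 1 / (‖τ‖ * (B * K)) with he2
  have e1p : 0 < e1 := by positivity
  have e2p : 0 < e2 := by positivity
  refine ⟨min e1 e2 / 2, by positivity, ?_⟩
  intro ξ hξ hv h1 h2
  have hm1 : min e1 e2 / 2 < e1 := by
    have := min_le_left e1 e2; linarith
  have hm2 : min e1 e2 / 2 < e2 := by
    have := min_le_right e1 e2; linarith
  obtain ⟨a1, a2⟩ := arg_pos_of ξ hξ
  have hn : ‖ξ‖ ≤ B * ξ.im := by
    have hre : |ξ.re| ≤ (K + |τ.re|) / τ.im * ξ.im := by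
      have : τ.im * ξ.re = (τ * ξ).im - τ.re * ξ.im := by rw [Complex.mul_im]; ring
      have h3 : τ.im * |ξ.re| ≤ (K + |τ.re|) * ξ.im := by
        rw [← abs_of_pos hτ, ← abs_mul, this]
        calc |(τ * ξ).im - τ.re * ξ.im| ≤ |(τ * ξ).im| + |τ.re * ξ.im| := abs_sub _ _
          _ = (τ * ξ).im + |τ.re| * ξ.im := by rw [abs_of_pos hv, abs_mul, abs_of_pos hξ]
          _ ≤ _ := by linarith
      rw [div_mul_eq_mul_div, le_div_iff₀ hτ]; linarith
    have := Complex.norm_le_abs_re_add_abs_im ξ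
    rw [abs_of_pos hξ] at this
    rw [hB]; linarith
  have hξn : 0 < ‖ξ‖ := hξ.trans_le (Complex.im_le_norm ξ)
  have hs1 : e1 ≤ Real.sin (arg ξ) := by
    have := Complex.norm_mul_sin_arg ξ
    rw [he1, div_le_iff₀ hBp]
    rw [← this] at hn
    have : ‖ξ‖ * 1 ≤ ‖ξ‖ * (Real.sin (arg ξ) * B) := by linarith
    exact le_of_mul_le_mul_left this hξn
  have hs2 : e2 ≤ Real.sin (arg τ + arg ξ) := by
    have hn2 : ‖ξ‖ ≤ B * K * (τ * ξ).im := by nlinarith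
    rw [im_mul_eq] at hn2
    rw [he2, div_le_iff₀ (by positivity)]
    have : ‖ξ‖ * 1 ≤ ‖ξ‖ * (Real.sin (arg τ + arg ξ) * (‖τ‖ * (B * K))) := by linarith
    exact le_of_mul_le_mul_left this hξn
  constructor
  · exact hm1.trans_le (hs1.trans (Real.sin_le a1.le))
  · have hlt : arg τ + arg ξ < Real.pi := by
      by_contra hcon
      push Not at hcon
      have : Real.sin (arg τ + arg ξ) ≤ 0 := by
        have h := Real.sin_nonneg_of_nonneg_of_le_pi (x := arg τ + arg ξ - Real.pi) (by linarith) (by linarith)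
        rw [Real.sin_sub_pi] at h; linarith
      linarith
    have h3 : Real.sin (arg τ + arg ξ) ≤ Real.pi - (arg τ + arg ξ) := by
      rw [← Real.sin_pi_sub]
      exact Real.sin_le (by linarith)
    linarith

lemma of_sector (τ : ℂ) (hτ : 0 < τ.im) (ε : ℝ) (hε : 0 < ε) : ∃ δ : ℝ, 0 < δ ∧ ∃ K : ℝ, 1 < K ∧
    ∀ ξ : ℂ, 0 < ‖ξ‖ → ε < arg ξ → arg ξ < Real.pi - arg τ - ε →
      δ * ‖ξ‖ ≤ ξ.im ∧ δ * ‖ξ‖ ≤ (τ * ξ).im ∧ ξ.im < K * (τ * ξ).im ∧ (τ * ξ).im < K * ξ.im := by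
  obtain ⟨t1, t2⟩ := arg_pos_of τ hτ
  have hτn : 0 < ‖τ‖ := hτ.trans_le (Complex.im_le_norm τ)
  by_cases hε2 : ε < Real.pi / 2
  swap
  · refine ⟨1, one_pos, 2, by norm_num, ?_⟩
    intro ξ h0 h1 h2
    exfalso; linarith
  have hsε : 0 < Real.sin ε := Real.sin_pos_of_pos_of_lt_pi hε (by linarith)
  set δ := Real.sin ε * min 1 ‖τ‖ with hδ
  have hδp : 0 < δ := by positivity
  have d1 : δ ≤ Real.sin ε := by
    have := min_le_left 1 ‖τ‖; rw [hδ]; nlinarith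
  have d2 : δ ≤ ‖τ‖ * Real.sin ε := by
    have := min_le_right 1 ‖τ‖; rw [hδ]; nlinarith
  refine ⟨δ, hδp, (1 + ‖τ‖) / δ + 1, by linarith [show 0 < (1 + ‖τ‖) / δ by positivity], ?_⟩
  intro ξ h0 h1 h2
  have sinlow : ∀ x, ε < x → x < Real.pi - ε → Real.sin ε ≤ Real.sin x := by
    intro x hx1 hx2
    rcases le_total x (Real.pi / 2) with h | h
    · exact Real.sin_le_sin_of_le_of_le_pi_div_two (by linarith) h hx1.le
    · rw [← Real.sin_pi_sub x]
      exact Real.sin_le_sin_of_le_of_le_pi_div_two (by linarith) (by linarith) (by linarith)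
  have s1 := sinlow (arg ξ) h1 (by linarith)
  have s2 := sinlow (arg τ + arg ξ) (by linarith) (by linarith)
  have b1 : δ * ‖ξ‖ ≤ ξ.im := by
    rw [← Complex.norm_mul_sin_arg ξ]; nlinarith
  have b2 : δ * ‖ξ‖ ≤ (τ * ξ).im := by
    rw [im_mul_eq]
    have : δ ≤ ‖τ‖ * Real.sin (arg τ + arg ξ) := d2.trans (by gcongr)
    nlinarith
  have u1 : ξ.im ≤ ‖ξ‖ := Complex.im_le_norm ξ
  have u2 : (τ * ξ).im ≤ ‖τ‖ * ‖ξ‖ := by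
    rw [← norm_mul]; exact Complex.im_le_norm _
  have p0 : 0 < δ * ‖ξ‖ := by positivity
  have key : ∀ v : ℝ, δ * ‖ξ‖ ≤ v → (1 + ‖τ‖) * ‖ξ‖ < ((1 + ‖τ‖) / δ + 1) * v := by
    intro v hv
    have h : (1 + ‖τ‖) / δ * (δ * ‖ξ‖) ≤ (1 + ‖τ‖) / δ * v := by gcongr
    have e : (1 + ‖τ‖) / δ * (δ * ‖ξ‖) = (1 + ‖τ‖) * ‖ξ‖ := by field_simp
    rw [e] at h
    linarith
  refine ⟨b1, b2, lt_of_le_of_lt ?_ (key _ b2), lt_of_le_of_lt ?_ (key _ b1)⟩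
  · nlinarith
  · nlinarith

/-- Lift of a point of the tube. -/
noncomputable def Ph (τ : ℂ) (n : ℤ) (p : ℂ × ℂ) : ℂ × ℂ :=
  (exp (2 * Real.pi * I * (p.2 - τ * (p.1 + n))), p.1 + n)

lemma Ph_mem (τ : ℂ) (hτ : 0 < τ.im) (U : Set (ℂ × ℂ))
    (hUsect : ∀ c : ℝ, 0 < c → ∀ ε : ℝ, 0 < ε → ∃ R : ℝ, 0 < R ∧ Ssector τ c ε R ⊆ U)
    (K C : ℝ) (hK : 1 < K) (hC : 0 < C) : ∃ T : ℝ, ∀ p : ℂ × ℂ, (p.1.im, p.2.im) ∈ Om K T →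
      ∀ n : ℤ, |(p.2 - τ * (p.1 + n)).im| ≤ C → Ph τ n p ∈ U := by
  obtain ⟨ε, hε, hsec⟩ := sector_of τ hτ (2 * K) (by linarith)
  have hpi := Real.pi_pos
  obtain ⟨R, hR, hRU⟩ := hUsect (2 * Real.pi * C + 1) (by positivity) ε hε
  refine ⟨max R (2 * C), ?_⟩
  rintro ⟨ξ, η⟩ ⟨h1, h2, h3, h4⟩ n hn
  simp only at h1 h2 h3 h4 hn
  obtain ⟨h1a, h1b⟩ := max_lt_iff.mp h1
  obtain ⟨h2a, h2b⟩ := max_lt_iff.mp h2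
  apply hRU
  rw [Complex.sub_im] at hn
  obtain ⟨n1, n2⟩ := abs_le.mp hn
  have him : (ξ + n).im = ξ.im := by simp
  obtain ⟨k1, k2⟩ := hsec (ξ + n) (by rw [him]; linarith) (by linarith)
    (by rw [him]; nlinarith) (by rw [him]; nlinarith)
  have hnorm : ‖exp (2 * Real.pi * I * (η - τ * (ξ + n)))‖ =
      Real.exp (-(2 * Real.pi * (η.im - (τ * (ξ + n)).im))) := by
    rw [Complex.norm_exp, ← Complex.sub_im]
    congr 1
    generalize η - τ * (ξ + n) = w
    simp
  refine ⟨exp_ne_zero _, ?_, ?_, ?_, k1, k2⟩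
  · simp only [Ph]
    rw [hnorm, Real.exp_lt_exp]
    nlinarith
  · simp only [Ph]
    rw [hnorm, Real.exp_lt_exp]
    nlinarith
  · simp only [Ph]
    have := Complex.im_le_norm (ξ + n)
    rw [him] at this
    linarith

lemma Ph_step (τ : ℂ) (U : Set (ℂ × ℂ)) (f : ℂ × ℂ → ℂ)
    (hinv : ∀ p : ℂ × ℂ, p ∈ U →
      (Complex.exp (2 * (Real.pi : ℂ) * Complex.I * τ) * p.1, p.2 - 1) ∈ U →
      f (Complex.exp (2 * (Real.pi : ℂ) * Complex.I * τ) * p.1, p.2 - 1) = f p)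
    (p : ℂ × ℂ) (n : ℤ) (h1 : Ph τ n p ∈ U) (h2 : Ph τ (n + 1) p ∈ U) :
    f (Ph τ n p) = f (Ph τ (n + 1) p) := by
  have e : Ph τ n p = (Complex.exp (2 * (Real.pi : ℂ) * Complex.I * τ) * (Ph τ (n + 1) p).1,
      (Ph τ (n + 1) p).2 - 1) := by
    simp only [Ph]
    rw [← exp_add]
    refine Prod.ext ?_ ?_
    · simp only; congr 1; push_cast; ring
    · simp only; push_cast; ring
  rw [e] at h1 ⊢
  exact hinv _ h2 h1

lemma Ph_indep (τ : ℂ) (hτ : 0 < τ.im) (U : Set (ℂ × ℂ)) (f : ℂ × ℂ → ℂ)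
    (hinv : ∀ p : ℂ × ℂ, p ∈ U →
      (Complex.exp (2 * (Real.pi : ℂ) * Complex.I * τ) * p.1, p.2 - 1) ∈ U →
      f (Complex.exp (2 * (Real.pi : ℂ) * Complex.I * τ) * p.1, p.2 - 1) = f p)
    (p : ℂ × ℂ) (C : ℝ) (hU : ∀ n : ℤ, |(p.2 - τ * (p.1 + n)).im| ≤ C → Ph τ n p ∈ U)
    (n m : ℤ) (hn : |(p.2 - τ * (p.1 + n)).im| ≤ C) (hm : |(p.2 - τ * (p.1 + m)).im| ≤ C) :
    f (Ph τ n p) = f (Ph τ m p) := by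
  have hd : ∀ n : ℤ, (p.2 - τ * (p.1 + n)).im = (p.2 - τ * p.1).im - n * τ.im := by
    intro n
    simp [Complex.mul_im]; ring
  have main : ∀ k : ℕ, ∀ n : ℤ, |(p.2 - τ * (p.1 + n)).im| ≤ C →
      |(p.2 - τ * (p.1 + ((n + k : ℤ) : ℂ))).im| ≤ C → f (Ph τ n p) = f (Ph τ (n + k) p) := by
    intro k
    induction k with
    | zero => intro n _ _; simp
    | succ k ih =>
      intro n hn hk
      have hk' : |(p.2 - τ * (p.1 + ((n + k : ℤ) : ℂ))).im| ≤ C := by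
        rw [hd] at hn hk ⊢
        push_cast at hk ⊢
        rw [abs_le] at *
        have : 0 ≤ (k:ℝ) * τ.im := by positivity
        constructor <;> linarith
      rw [ih n hn hk']
      have e : (n + ((k + 1 : ℕ) : ℤ)) = n + k + 1 := by push_cast; ring
      rw [e] at hk ⊢
      exact Ph_step τ U f hinv p _ (hU _ hk') (hU _ hk)
  rcases le_total n m with h | h
  · obtain ⟨k, rfl⟩ := Int.le.dest h
    exact main k n hn hm
  · obtain ⟨k, rfl⟩ := Int.le.dest h
    exact (main k m hm hn).symm

/-- The index putting the first coordinate in a fundamental annulus. -/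
noncomputable def Nf (τ : ℂ) (p : ℂ × ℂ) : ℤ := ⌊(p.2 - τ * p.1).im / τ.im⌋

lemma Nf_bound (τ : ℂ) (hτ : 0 < τ.im) (p : ℂ × ℂ) :
    |(p.2 - τ * (p.1 + Nf τ p)).im| ≤ τ.im := by
  have hd : (p.2 - τ * (p.1 + Nf τ p)).im = (p.2 - τ * p.1).im - Nf τ p * τ.im := by
    simp [Complex.mul_im]; ring
  rw [hd]
  have h1 := Int.floor_le ((p.2 - τ * p.1).im / τ.im)
  have h2 := Int.lt_floor_add_one ((p.2 - τ * p.1).im / τ.im)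
  rw [le_div_iff₀ hτ] at h1
  rw [div_lt_iff₀ hτ] at h2
  unfold Nf
  rw [abs_le]
  constructor <;> linarith

/-- The function on the tube. -/
noncomputable def Ft (τ : ℂ) (f : ℂ × ℂ → ℂ) (p : ℂ × ℂ) : ℂ := f (Ph τ (Nf τ p) p)

lemma Ft_per1 (τ : ℂ) (hτ : 0 < τ.im) (f : ℂ × ℂ → ℂ) (ξ η : ℂ) :
    Ft τ f (ξ + 1, η) = Ft τ f (ξ, η) := by
  have hN : Nf τ (ξ + 1, η) = Nf τ (ξ, η) - 1 := by
    unfold Nf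
    rw [← Int.floor_sub_one]
    congr 1
    field_simp
    simp
    ring
  unfold Ft
  rw [hN]
  congr 1
  simp only [Ph]
  refine Prod.ext ?_ ?_
  · simp only; congr 1; push_cast; ring
  · simp only; push_cast; ring

lemma Ft_per2 (τ : ℂ) (f : ℂ × ℂ → ℂ) (ξ η : ℂ) :
    Ft τ f (ξ, η + 1) = Ft τ f (ξ, η) := by
  have hN : Nf τ (ξ, η + 1) = Nf τ (ξ, η) := by
    unfold Nf
    simp
  unfold Ft
  rw [hN]
  congr 1
  simp only [Ph]
  refine Prod.ext ?_ rfl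
  simp only
  rw [← exp_int_shift (-1) (2 * Real.pi * I * (η - τ * (ξ + Nf τ (ξ, η))))]
  congr 1; push_cast; ring

/-- a bounded holomorphic function on a transversely sectorial domain of
opening `(0, π − ϖ)` invariant under `F₁₀₀(z,ξ) = (qz, ξ−1)` factors through the Serre map
`Π` as `f = g ∘ Π` with `g` holomorphic at the corner point; if moreover `f` is (sup-)small
at infinity then `g(0,0) = 0`. -/
theorem statement5 (τ : ℂ) (hτ : 0 < τ.im)
    (U : Set (ℂ × ℂ)) (hUopen : IsOpen U) (hU0 : U ⊆ {p : ℂ × ℂ | p.1 ≠ 0})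
    (hUsect : ∀ c : ℝ, 0 < c → ∀ ε : ℝ, 0 < ε → ∃ R : ℝ, 0 < R ∧ Ssector τ c ε R ⊆ U)
    (f : ℂ × ℂ → ℂ) (hf : DifferentiableOn ℂ f U)
    (hbd : ∃ M : ℝ, ∀ p ∈ U, ‖f p‖ ≤ M)
    (hinv : ∀ p : ℂ × ℂ, p ∈ U →
      (Complex.exp (2 * (Real.pi : ℂ) * Complex.I * τ) * p.1, p.2 - 1) ∈ U →
      f (Complex.exp (2 * (Real.pi : ℂ) * Complex.I * τ) * p.1, p.2 - 1) = f p) :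
    ∃ r : ℝ, 0 < r ∧ ∃ g : ℂ × ℂ → ℂ,
      DifferentiableOn ℂ g {w : ℂ × ℂ | ‖w.1‖ < r ∧ ‖w.2‖ < r} ∧
      (∀ c : ℝ, 0 < c → ∀ ε : ℝ, 0 < ε → ∃ R : ℝ, 0 < R ∧
        ∀ p ∈ Ssector τ c ε R, f p = g (PiMap τ p)) ∧
      ((∀ c : ℝ, 0 < c → ∀ ε : ℝ, 0 < ε → ∀ η : ℝ, 0 < η → ∃ R : ℝ, 0 < R ∧
          ∀ p ∈ Ssector τ c ε R, ‖f p‖ ≤ η) → g (0, 0) = 0) := by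
  have hpi := Real.pi_pos
  obtain ⟨M, hM⟩ := hbd
  -- value of the tube function through any admissible lift
  have hval : ∀ K C : ℝ, 1 < K → 0 < C → ∃ T : ℝ, ∀ p : ℂ × ℂ, (p.1.im, p.2.im) ∈ Om K T →
      ∀ n : ℤ, |(p.2 - τ * (p.1 + n)).im| ≤ C → Ph τ n p ∈ U ∧ Ft τ f p = f (Ph τ n p) := by
    intro K C hK hC
    obtain ⟨T, hT⟩ := Ph_mem τ hτ U hUsect K (max C τ.im) hK (lt_max_of_lt_left hC)
    refine ⟨T, fun p hp n hn => ?_⟩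
    have hn' := hn.trans (le_max_left C τ.im)
    exact ⟨hT p hp n hn', Ph_indep τ hτ U f hinv p (max C τ.im) (hT p hp) _ _
      ((Nf_bound τ hτ p).trans (le_max_right _ _)) hn'⟩
  have hT : ∀ K : ℝ, ∃ T : ℝ, 1 < K → ∀ p : ℂ × ℂ, (p.1.im, p.2.im) ∈ Om K T →
      ∀ n : ℤ, |(p.2 - τ * (p.1 + n)).im| ≤ 2 * τ.im → Ph τ n p ∈ U ∧ Ft τ f p = f (Ph τ n p) := by
    intro K
    by_cases hK : 1 < K
    · obtain ⟨T, hT⟩ := hval K (2 * τ.im) hK (by linarith)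
      exact ⟨T, fun _ => hT⟩
    · exact ⟨0, fun h => absurd h hK⟩
  choose T hT using hT
  obtain ⟨r, hr, g, hg, hFg⟩ := tube_main (Ft τ f) (Ft_per1 τ hτ f) (Ft_per2 τ f) T M (by
    intro K hK p hp
    have hN := Nf_bound τ hτ p
    obtain ⟨hU, hF⟩ := hT K hK p hp (Nf τ p) (hN.trans (by linarith))
    refine ⟨?_, by rw [hF]; exact hM _ hU⟩
    have hcomp : DifferentiableAt ℂ (fun q => f (Ph τ (Nf τ p) q)) p := by
      apply DifferentiableAt.comp p (hf.differentiableAt (hUopen.mem_nhds hU))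
      unfold Ph
      fun_prop
    refine hcomp.congr_of_eventuallyEq ?_
    have o1 : ∀ᶠ q : ℂ × ℂ in nhds p, (q.1.im, q.2.im) ∈ Om K (T K) := by
      have hc : Continuous (fun q : ℂ × ℂ => (q.1.im, q.2.im)) :=
        (Complex.continuous_im.comp continuous_fst).prodMk (Complex.continuous_im.comp continuous_snd)
      exact hc.continuousAt.eventually ((Om_open K (T K)).mem_nhds hp)
    have o2 : ∀ᶠ q : ℂ × ℂ in nhds p, |(q.2 - τ * (q.1 + Nf τ p)).im| < 2 * τ.im := by
      have hc : Continuous (fun q : ℂ × ℂ => |(q.2 - τ * (q.1 + Nf τ p)).im|) :=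
        (Complex.continuous_im.comp (by fun_prop)).abs
      exact hc.continuousAt.eventually (gt_mem_nhds (by linarith))
    filter_upwards [o1, o2] with q h1 h2
    exact (hT K hK q h1 _ h2.le).2)
  have hmain : ∀ c : ℝ, 0 < c → ∀ ε : ℝ, 0 < ε → ∃ R : ℝ, 0 < R ∧
        ∀ p ∈ Ssector τ c ε R, f p = g (PiMap τ p) := by
    intro c hc ε hε
    obtain ⟨δ, hδ, K, hK, hsec⟩ := of_sector τ hτ ε hε
    set C := c / (2 * Real.pi) with hC
    have hCp : 0 < C := by positivity
    obtain ⟨T1, hT1⟩ := hval (2 * K) C (by linarith) hCp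
    obtain ⟨T2, hT2⟩ := hFg (2 * K) (by linarith)
    refine ⟨(2 * C + 2 * |T1| + 2 * |T2| + 1) / δ, by positivity, ?_⟩
    rintro ⟨z, ξ⟩ ⟨hz, hz1, hz2, hξR, ha1, ha2⟩
    simp only at hz hz1 hz2 hξR ha1 ha2
    rw [div_lt_iff₀ hδ] at hξR
    have a1 := abs_nonneg T1
    have a2 := abs_nonneg T2
    have b1 := le_abs_self T1
    have b2 := le_abs_self T2
    have hξ0 : 0 < ‖ξ‖ := by
      by_contra hcon
      have : ‖ξ‖ * δ ≤ 0 := mul_nonpos_of_nonpos_of_nonneg (not_lt.mp hcon) hδ.le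
      linarith
    obtain ⟨s1, s2, s3, s4⟩ := hsec ξ hξ0 ha1 ha2
    set η : ℂ := τ * ξ + Complex.log z / (2 * Real.pi * I) with hη
    have h2pi : (2 * Real.pi * I : ℂ) ≠ 0 := Complex.two_pi_I_ne_zero
    have e0 : η - τ * (ξ + (0:ℤ)) = Complex.log z / (2 * Real.pi * I) := by
      rw [hη]; push_cast; ring
    have e1 : Ph τ 0 (ξ, η) = (z, ξ) := by
      simp only [Ph]
      rw [e0, mul_div_cancel₀ _ h2pi, Complex.exp_log hz]
      simp
    have e2 : (Complex.log z / (2 * Real.pi * I)).im = -(Real.log ‖z‖ / (2 * Real.pi)) := by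
      have : Complex.log z / (2 * Real.pi * I) =
          -((Complex.log z / ((2 * Real.pi : ℝ) : ℂ)) * I) := by
        push_cast
        have hI : (I:ℂ) ≠ 0 := I_ne_zero
        have hp' : (Real.pi : ℂ) ≠ 0 := by exact_mod_cast hpi.ne'
        field_simp
        rw [I_sq]; ring
      rw [this, Complex.neg_im, Complex.mul_I_im, Complex.div_ofReal_re, Complex.log_re]
    have hzp : 0 < ‖z‖ := norm_pos_iff.mpr hz
    have l1 : -c < Real.log ‖z‖ := (Real.lt_log_iff_exp_lt hzp).mpr hz1
    have l2 : Real.log ‖z‖ < c := (Real.log_lt_iff_lt_exp hzp).mpr hz2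
    have hd : |(Complex.log z / (2 * Real.pi * I)).im| ≤ C := by
      rw [e2, abs_neg, abs_div, abs_of_pos (show (0:ℝ) < 2 * Real.pi by positivity), hC]
      gcongr
      exact (abs_lt.mpr ⟨l1, l2⟩).le
    have hηim : η.im = (τ * ξ).im + (Complex.log z / (2 * Real.pi * I)).im := by
      rw [hη, Complex.add_im]
    obtain ⟨d1, d2⟩ := abs_le.mp hd
    have hmem : ∀ T', 2 * |T'| + 2 * C + 1 < δ * ‖ξ‖ → (ξ.im, η.im) ∈ Om (2 * K) T' := by
      intro T' hT'
      have := le_abs_self T'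
      have := abs_nonneg T'
      rw [hηim]
      refine ⟨?_, ?_, ?_, ?_⟩
      · simp only; linarith
      · simp only; linarith
      · simp only; nlinarith
      · simp only; nlinarith
    have hv := (hT1 (ξ, η) (hmem T1 (by linarith)) 0 (by simp only; rw [e0]; exact hd)).2
    rw [e1] at hv
    rw [← hv, hT2 (ξ, η) (hmem T2 (by linarith))]
    congr 1
    simp only [PiMap]
    refine Prod.ext rfl ?_
    simp only
    rw [hη, mul_add, mul_div_cancel₀ _ h2pi, exp_add, Complex.exp_log hz, mul_comm]
    congr 2; ring
  refine ⟨r, hr, g, hg, hmain, ?_⟩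
  intro hsmall
  obtain ⟨t1, t2⟩ := arg_pos_of τ hτ
  have hopen : IsOpen {w : ℂ × ℂ | ‖w.1‖ < r ∧ ‖w.2‖ < r} := by
    have o1 : IsOpen {w : ℂ × ℂ | ‖w.1‖ < r} := isOpen_lt (by fun_prop) (by fun_prop)
    have o2 : IsOpen {w : ℂ × ℂ | ‖w.2‖ < r} := isOpen_lt (by fun_prop) (by fun_prop)
    exact o1.inter o2
  have hgc : ContinuousAt g (0, 0) :=
    (hg.differentiableAt (hopen.mem_nhds (by simpa using hr))).continuousAt
  set θ : ℝ := (Real.pi - arg τ) / 2 with hθ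
  set ε : ℝ := θ / 2 with hε
  have hθp : 0 < θ := by rw [hθ]; linarith
  have hεp : 0 < ε := by positivity
  set ζ : ℂ := exp (θ * I) with hζ
  have hζarg : arg ζ = θ := by
    rw [hζ, Complex.arg_exp_mul_I, toIocMod_eq_self]
    constructor <;> linarith
  have hζn : ‖ζ‖ = 1 := Complex.norm_exp_ofReal_mul_I θ
  have hp : ∀ (R l : ℝ), 0 < l → R < l → ((1:ℂ), (l:ℂ) * ζ) ∈ Ssector τ 1 ε R := by
    intro R l hl hR
    have harg : arg ((l:ℂ) * ζ) = θ := by rw [Complex.arg_real_mul ζ hl, hζarg]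
    refine ⟨one_ne_zero, ?_, ?_, ?_, ?_, ?_⟩
    · simp
    · simp
    · simp only [norm_mul, hζn, Complex.norm_real, mul_one]
      exact hR.trans_le (le_abs_self l)
    · simp only [harg]; linarith
    · simp only [harg]; linarith
  obtain ⟨δ, hδ, K, hK, hsec⟩ := of_sector τ hτ ε hεp
  obtain ⟨s1, s2, -, -⟩ := hsec ζ (by rw [hζn]; exact one_pos) (by rw [hζarg]; linarith)
    (by rw [hζarg]; linarith)
  rw [hζn, mul_one] at s1 s2
  have hlim0 : ∀ w : ℂ, δ ≤ w.im →
      Filter.Tendsto (fun l : ℝ => exp (2 * Real.pi * I * (l * w))) Filter.atTop (nhds 0) := by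
    intro w hw
    rw [Complex.tendsto_exp_nhds_zero_iff]
    have : ∀ l : ℝ, (2 * Real.pi * I * (l * w) : ℂ).re = -(2 * Real.pi * w.im * l) := by
      intro l
      simp
      try ring
    simp only [this]
    exact Filter.tendsto_neg_atTop_atBot.comp
      (Filter.tendsto_id.const_mul_atTop (by have := hδ.trans_le hw; positivity))
  have hlim : Filter.Tendsto (fun l : ℝ => PiMap τ ((1:ℂ), (l:ℂ) * ζ)) Filter.atTop (nhds (0, 0)) := by
    have e : (fun l : ℝ => PiMap τ ((1:ℂ), (l:ℂ) * ζ)) = fun l : ℝ =>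
        (exp (2 * Real.pi * I * (l * ζ)), exp (2 * Real.pi * I * (l * (τ * ζ)))) := by
      ext l : 1
      simp only [PiMap, one_mul]
      refine Prod.ext rfl ?_
      simp only; congr 1; ring
    rw [e]
    exact (hlim0 ζ s1).prodMk_nhds (hlim0 (τ * ζ) s2)
  have hlimg := (hgc.tendsto.comp hlim).norm
  obtain ⟨R1, -, hR1⟩ := hmain 1 one_pos ε hεp
  have : ‖g (0, 0)‖ ≤ 0 := by
    apply le_of_forall_pos_le_add
    intro e he
    rw [zero_add]
    obtain ⟨R2, -, hR2⟩ := hsmall 1 one_pos ε hεp e he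
    refine le_of_tendsto hlimg ?_
    filter_upwards [Filter.eventually_gt_atTop R1, Filter.eventually_gt_atTop R2,
      Filter.eventually_gt_atTop 0] with l h1 h2 h3
    simp only [Function.comp]
    rw [← hR1 _ (hp R1 l h3 h1)]
    exact hR2 _ (hp R2 l h3 h2)
  exact norm_le_zero_iff.mp this
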